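/- arXiv:1608.00518 — 2 statements merged into one kernel-verified Lean document; each statement's English description precedes it below -/
import Mathlib

section
/- Fix a set α, a natural number n, and an assignment U of an ultrafilter U(s) on α to every finite sequence s of elements of α. Let S be a U-tree of height n and let c be a function assigning to every length-n finite sequence of elements of α one of two colors. Then there exist a U-tree S' of height n with S' ⊆ S and a color i such that c(s) = i for every member s of S' of length n. -/
/-- `S` is a `U`-tree of height `n`: every member has length at most `n`, `S` contains
the empty sequence and is closed under initial segments, and for every `s ∈ S` of
length strictly less than `n` the set of one-point extensions of `s` lying in `S` is
`U s`-large. -/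
def IsUTree {α : Type*} (U : List α → Ultrafilter α) (n : ℕ) (S : Set (List α)) : Prop :=
  (∀ s ∈ S, s.length ≤ n) ∧
  ([] ∈ S) ∧
  (∀ s ∈ S, ∀ t : List α, t <+: s → t ∈ S) ∧
  (∀ s ∈ S, s.length < n → {a : α | s ++ [a] ∈ S} ∈ U s)

/-!
Color every sequence backwards from the leaves: a sequence of length `n` keeps its color, and a
shorter sequence `s` receives the color shared by `U s`-almost all of its one-point extensions.
The sequences of `S` all of whose initial segments have the color of the root form a `U`-tree, and
its members of length `n` all carry that color.
-/

section

variable {α κ : Type*} {U : List α → Ultrafilter α} {n : ℕ} {S T : Set (List α)}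

theorem IsUTree.sep_forall_prefix_mem (hS : IsUTree U n S) (nil_mem : [] ∈ T)
    (extend : ∀ s ∈ S, s ∈ T → s.length < n → ∀ᶠ a in U s, s ++ [a] ∈ T) :
    IsUTree U n {s ∈ S | ∀ t, t <+: s → t ∈ T} := by
  obtain ⟨length_le, nil_mem_S, prefix_mem, large⟩ := hS
  refine ⟨fun s hs ↦ length_le s hs.1, ⟨nil_mem_S, fun t ht ↦ ?_⟩, fun s hs t ht ↦ ?_,
    fun s hs hlt ↦ ?_⟩
  · rwa [List.prefix_nil.mp ht]
  · exact ⟨prefix_mem s hs.1 t ht, fun r hr ↦ hs.2 r (hr.trans ht)⟩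
  · filter_upwards [large s hs.1 hlt, extend s hs.1 (hs.2 s s.prefix_refl) hlt] with a haS haT
    refine ⟨haS, fun t ht ↦ ?_⟩
    rcases List.prefix_concat_iff.mp ht with rfl | ht
    · exact haT
    · exact hs.2 t ht

variable [Finite κ]

theorem exists_eventually_eq_of_finite (u : Ultrafilter α) (f : α → κ) :
    ∃ k, ∀ᶠ a in u, f a = k :=
  Ultrafilter.eventually_exists_iff.mp <| .of_forall fun a ↦ ⟨f a, rfl⟩

/-- The limit along an ultrafilter of a function with finitely many values, that is, the value it
takes almost everywhere. -/
noncomputable def eventualValue (u : Ultrafilter α) (f : α → κ) : κ :=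
  (exists_eventually_eq_of_finite u f).choose

theorem eventually_eq_eventualValue (u : Ultrafilter α) (f : α → κ) :
    ∀ᶠ a in u, f a = eventualValue u f :=
  (exists_eventually_eq_of_finite u f).choose_spec

/-- The backward propagation of a coloring `c` of the sequences of length `n` to the shorter
sequences, each taking the color of almost all of its one-point extensions. Sequences of length
greater than `n` also keep their `c`-color. -/
noncomputable def limitColor (U : List α → Ultrafilter α) (n : ℕ) (c : List α → κ)
    (s : List α) : κ :=
  if s.length < n then eventualValue (U s) fun a ↦ limitColor U n c (s ++ [a]) else c s
termination_by n - s.length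
decreasing_by
  rw [List.length_append, List.length_singleton]
  omega

theorem limitColor_of_le_length (U : List α → Ultrafilter α) (c : List α → κ) {s : List α}
    (hs : n ≤ s.length) : limitColor U n c s = c s := by
  rw [limitColor, if_neg hs.not_gt]

theorem eventually_limitColor_append_singleton (U : List α → Ultrafilter α) (c : List α → κ)
    {s : List α} (hs : s.length < n) :
    ∀ᶠ a in U s, limitColor U n c (s ++ [a]) = limitColor U n c s := by
  rw [limitColor.eq_def U n c s, if_pos hs]
  exact eventually_eq_eventualValue (U s) _

theorem exists_homogeneous_subtree_general (hS : IsUTree U n S) (c : List α → κ) :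
    ∃ S' : Set (List α), ∃ i : κ,
      IsUTree U n S' ∧ S' ⊆ S ∧ ∀ s ∈ S', s.length = n → c s = i := by
  let rootColored : Set (List α) := {s | limitColor U n c s = limitColor U n c []}
  have extend (s : List α) (hs : s ∈ rootColored) (hlt : s.length < n) :
      ∀ᶠ a in U s, s ++ [a] ∈ rootColored := by
    filter_upwards [eventually_limitColor_append_singleton U c hlt] with a ha
    exact ha.trans hs
  refine ⟨{s ∈ S | ∀ t, t <+: s → t ∈ rootColored}, limitColor U n c [],
    hS.sep_forall_prefix_mem rfl fun s _ ↦ extend s, Set.sep_subset _ _, fun s hs hlen ↦ ?_⟩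
  calc
    c s = limitColor U n c s := (limitColor_of_le_length U c hlen.ge).symm
    _ = limitColor U n c [] := hs.2 s s.prefix_refl

end

/-- For any 2-coloring of the length-`n` sequences there is a `U`-subtree of height `n`
all of whose maximal members get the same color. -/
theorem exists_homogeneous_subtree
    {α : Type*} (n : ℕ) (U : List α → Ultrafilter α)
    (S : Set (List α)) (hS : IsUTree U n S) (c : List α → Bool) :
    ∃ S' : Set (List α), ∃ i : Bool,
      IsUTree U n S' ∧ S' ⊆ S ∧ ∀ s ∈ S', s.length = n → c s = i :=
  exists_homogeneous_subtree_general hS c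
end

section
/- Fix a set α, a natural number n, an index set I, and an assignment U of an ultrafilter U(s) on α to every finite sequence s of elements of α, such that every U(s) is I-indecomposable. Let S be a U-tree of height n and let m be a function from finite sequences of elements of α to I. Then there exist a U-tree S' of height n with S' ⊆ S and values i_0, …, i_{n-1} ∈ I such that m(s) = i_k for every s ∈ S' of length k < n; in particular m takes at most n values on the members of S' of length less than n. -/
/-- `I`-indecomposability of an ultrafilter `W`: every `I`-valued function is constant on a set
in `W`. It is what makes limits of labellings along `W` exist. -/
def IsIndecomposable {α : Type*} (I : Type*) (W : Ultrafilter α) : Prop :=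
  ∀ f : α → I, ∃ i : I, f ⁻¹' {i} ∈ W

namespace IsUTree

variable {α : Type*} {U : List α → Ultrafilter α} {n : ℕ}

theorem sep_forall_prefix {S : Set (List α)} (hS : IsUTree U n S) {P : List α → Prop}
    (nil : P []) (concat : ∀ s ∈ S, s.length < n → ∀ᶠ a in U s, P (s ++ [a])) :
    IsUTree U n {s ∈ S | ∀ t, t <+: s → P t} := by
  obtain ⟨length_le, nil_mem, prefix_mem, succ_mem⟩ := hS
  refine ⟨fun s hs => length_le s hs.1, ⟨nil_mem, fun t ht => List.prefix_nil.1 ht ▸ nil⟩,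
    fun s hs t hts => ⟨prefix_mem s hs.1 t hts, fun r hrt => hs.2 r (hrt.trans hts)⟩, ?_⟩
  rintro s ⟨hs, hPs⟩ hsn
  filter_upwards [succ_mem s hs hsn, concat s hs hsn] with a ha hPa
  refine ⟨ha, fun t ht => ?_⟩
  rcases List.prefix_concat_iff.1 ht with rfl | hts
  exacts [hPa, hPs t hts]

theorem iInter {ι : Type*} [Finite ι] [Nonempty ι] {T : ι → Set (List α)}
    (hT : ∀ k, IsUTree U n (T k)) : IsUTree U n (⋂ k, T k) := by
  simp only [IsUTree, Set.mem_iInter]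
  refine ⟨fun s hs => (hT (Classical.arbitrary ι)).1 s (hs _), fun k => (hT k).2.1,
    fun s hs t hts k => (hT k).2.2.1 s (hs k) t hts, fun s hs hsn => ?_⟩
  exact Filter.eventually_all.2 fun k => (hT k).2.2.2 s (hs k) hsn

theorem exists_subtree_constant_on_level {I : Type*} {S : Set (List α)} (hS : IsUTree U n S)
    (hU : ∀ s ∈ S, s.length < n → IsIndecomposable I (U s)) (m : List α → I) (k : ℕ) :
    ∃ T ⊆ S, IsUTree U n T ∧ ∃ i : I, ∀ s ∈ T, s.length = k → m s = i := by
  induction k generalizing m with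
  | zero => exact ⟨S, subset_rfl, hS, m [], fun s _ hs => by rw [List.length_eq_zero_iff.1 hs]⟩
  | succ k ih =>
    have : Nonempty I := ⟨m []⟩
    choose! mLim hmLim using fun s hs hsn => hU s hs hsn fun a => m (s ++ [a])
    obtain ⟨T, hTS, hT, i, hi⟩ := ih mLim
    refine ⟨{s ∈ T | ∀ t, t <+: s → t.length = k + 1 → m t = i}, fun s hs => hTS hs.1,
      hT.sep_forall_prefix (by simp) ?_, i, fun s hs => hs.2 s List.prefix_rfl⟩
    intro s hs hsn
    filter_upwards [hmLim s (hTS hs) hsn] with a (ha : m (s ++ [a]) = mLim s) hlen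
    have hsk : s.length = k := by simpa using hlen
    rw [ha, hi s hs hsk]

end IsUTree

theorem exists_levelwise_constant_subtree_general {α I : Type*} {n : ℕ}
    {U : List α → Ultrafilter α} {S : Set (List α)} (hS : IsUTree U n S)
    (hU : ∀ s ∈ S, s.length < n → IsIndecomposable I (U s)) (m : List α → I) :
    ∃ S' ⊆ S, IsUTree U n S' ∧ ∃ g : ℕ → I, ∀ s ∈ S', m s = g s.length := by
  choose T hTS hT g hg using hS.exists_subtree_constant_on_level hU m
  have hInter : IsUTree U n (⋂ k : Fin (n + 1), T k) := IsUTree.iInter fun k => hT k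
  refine ⟨⋂ k : Fin (n + 1), T k, (Set.iInter_subset _ 0).trans (hTS _), hInter, g,
    fun s hs => ?_⟩
  have hlt : s.length < n + 1 := Nat.lt_succ_of_le (hInter.1 s hs)
  exact hg s.length s (Set.mem_iInter.1 hs ⟨s.length, hlt⟩) rfl

/-- If each ultrafilter `U s` is `I`-indecomposable, then any labelling
`m : List α → I` can be made constant on each level of a `U`-subtree of height `n`:
there are values `i_0, …, i_{n-1} ∈ I` with `m s = i_k` for every member `s` of the
subtree of length `k < n`. -/
theorem exists_levelwise_constant_subtree
    {α I : Type*} (n : ℕ) (U : List α → Ultrafilter α)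
    (hU : ∀ s : List α, ∀ f : α → I, ∃ i : I, f ⁻¹' {i} ∈ U s)
    (S : Set (List α)) (hS : IsUTree U n S) (m : List α → I) :
    ∃ S' : Set (List α), ∃ g : Fin n → I,
      IsUTree U n S' ∧ S' ⊆ S ∧
      ∀ s ∈ S', ∀ h : s.length < n, m s = g ⟨s.length, h⟩ := by
  obtain ⟨S', hS'S, hS', g, hg⟩ :=
    exists_levelwise_constant_subtree_general hS (fun s _ _ => hU s) m
  exact ⟨S', fun k => g k, hS', hS'S, fun s hs _ => hg s hs⟩
end
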